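/- arXiv:0902.1634 — 2 statements merged into one kernel-verified Lean document; each statement's English description precedes it below -/
import Mathlib

section
/- Let q be a prime power and let n ≥ k ≥ 1 be integers. If C ⊆ (F_q)^n is a linear code of dimension k and minimum Hamming distance at least d (with d ≥ 1), then n ≥ Σ_{i=0}^{k−1} ⌈d/q^i⌉ (the Griesmer bound). -/
/-!
Let `c` be a nonzero codeword of minimum weight `w ≥ d` in a `k`-dimensional code `C` over a field
with `q` elements, and restrict all codewords to the coordinates at which `c` vanishes. By
minimality of `w`, only the multiples of `c` restrict to zero, so the restrictions form a code of
dimension `k - 1` and length `n - w`. If `v ∈ C` is not a multiple of `c`, the `q` words `v + a • c`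
have average weight at least `w`. To this average each coordinate in the support of `c` contributes
`1 - 1 / q`, and the other coordinates contribute the weight of the restriction of `v`, which is
therefore at least `w / q ≥ d / q`. The bound follows by induction on `k`.
-/

open Finset Module

variable {F ι : Type*} [Field F]

/-- Restriction of words to the coordinates at which `x` vanishes. -/
def restrictZeros (x : ι → F) : (ι → F) →ₗ[F] ({i // x i = 0} → F) :=
  LinearMap.funLeft F F Subtype.val

@[simp]
theorem restrictZeros_apply (x y : ι → F) (i : {i // x i = 0}) : restrictZeros x y i = y i :=
  rfl

@[simp]
theorem restrictZeros_self (x : ι → F) : restrictZeros x x = 0 :=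
  funext Subtype.property

/-- The residual code of `C` with respect to the word `x`: the code `C` punctured on the support
of `x`. -/
def residualCode (C : Submodule F (ι → F)) (x : ι → F) : Submodule F ({i // x i = 0} → F) :=
  C.map (restrictZeros x)

variable [DecidableEq F] [Fintype ι]

theorem card_zeros_add_hammingNorm (x : ι → F) :
    Fintype.card {i // x i = 0} + hammingNorm x = Fintype.card ι := by
  rw [Fintype.card_subtype, hammingNorm, card_filter_add_card_filter_not, card_univ]

/-- A minimum weight word of the linear code `C`: a nonzero codeword whose Hamming weight is the
minimum distance of `C`. -/
structure IsMinWeightWord (C : Submodule F (ι → F)) (c : ι → F) : Prop where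
  mem : c ∈ C
  ne_zero : c ≠ 0
  hammingNorm_le : ∀ v ∈ C, v ≠ 0 → hammingNorm c ≤ hammingNorm v

theorem exists_isMinWeightWord {C : Submodule F (ι → F)} (hC : C ≠ ⊥) :
    ∃ c, IsMinWeightWord C c := by
  obtain ⟨c, ⟨hcC, hc₀⟩, hc⟩ :=
    exists_minimalFor_of_wellFoundedLT (fun v ↦ v ∈ C ∧ v ≠ 0) hammingNorm (C.ne_bot_iff.mp hC)
  exact ⟨c, hcC, hc₀, fun v hv hv₀ ↦ (le_total _ _).elim id (hc ⟨hv, hv₀⟩)⟩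

namespace IsMinWeightWord

variable {C : Submodule F (ι → F)} {c v : ι → F}

theorem restrictZeros_eq_zero_iff (hc : IsMinWeightWord C c) (hv : v ∈ C) :
    restrictZeros c v = 0 ↔ v ∈ F ∙ c := by
  refine ⟨fun hres ↦ ?_, fun hmem ↦ ?_⟩
  · obtain ⟨i, hi⟩ := Function.ne_iff.mp hc.ne_zero
    refine Submodule.mem_span_singleton.mpr ⟨v i / c i, (sub_eq_zero.mp ?_).symm⟩
    by_contra hne
    -- Subtracting this multiple of `c` clears coordinate `i`, so it leaves a word lighter than `c`.
    have hlt : hammingNorm (v - (v i / c i) • c) < hammingNorm c := by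
      refine card_lt_card (ssubset_iff_of_subset ?_ |>.mpr ⟨i, by simpa using hi, ?_⟩)
      · refine monotone_filter_right _ fun j _ hj hcj ↦ hj ?_
        have hvj : v j = 0 := congrFun hres ⟨j, hcj⟩
        simp [hvj, hcj]
      · have hci : c i ≠ 0 := hi
        simp [div_mul_cancel₀ _ hci]
    exact hlt.not_ge (hc.hammingNorm_le _ (C.sub_mem hv (C.smul_mem _ hc.mem)) hne)
  · obtain ⟨a, rfl⟩ := Submodule.mem_span_singleton.mp hmem
    rw [map_smul, restrictZeros_self, smul_zero]

theorem finrank_residualCode_add_one (hc : IsMinWeightWord C c) :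
    finrank F (residualCode C c) + 1 = finrank F C := by
  have hker : LinearMap.ker ((restrictZeros c).domRestrict C) = F ∙ (⟨c, hc.mem⟩ : C) := by
    ext ⟨v, hv⟩
    simp [hc.restrictZeros_eq_zero_iff hv, Submodule.mem_span_singleton]
  have hc₀ : (⟨c, hc.mem⟩ : C) ≠ 0 := by simpa using hc.ne_zero
  rw [← LinearMap.finrank_range_add_finrank_ker ((restrictZeros c).domRestrict C), hker,
    finrank_span_singleton hc₀, LinearMap.range_domRestrict, residualCode]

end IsMinWeightWord

variable [Fintype F]

theorem card_filter_add_mul_ne_zero {u : F} (hu : u ≠ 0) (v : F) :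
    #{a | v + a * u ≠ 0} = Fintype.card F - 1 := by
  have hroot (a : F) : v + a * u ≠ 0 ↔ a ≠ -v / u := by
    rw [ne_eq, ne_eq, eq_div_iff hu, eq_neg_iff_add_eq_zero, add_comm]
  simp only [hroot, filter_ne', card_erase_of_mem (mem_univ _), card_univ]

theorem sum_hammingNorm_add_smul (x y : ι → F) :
    ∑ a : F, hammingNorm (y + a • x) =
      Fintype.card F * hammingNorm (restrictZeros x y) + (Fintype.card F - 1) * hammingNorm x := by
  have hzero (i : {i // x i = 0}) :
      #{a : F | y i + a * x i ≠ 0} = Fintype.card F * if restrictZeros x y i ≠ 0 then 1 else 0 := by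
    rw [i.property, restrictZeros_apply]
    split_ifs with hy <;> simp [hy]
  have hsupp (i : {i // x i ≠ 0}) : #{a : F | y i + a * x i ≠ 0} = Fintype.card F - 1 :=
    card_filter_add_mul_ne_zero i.property (y i)
  calc ∑ a : F, hammingNorm (y + a • x)
      = ∑ i, #{a : F | y i + a * x i ≠ 0} :=
        sum_card_bipartiteAbove_eq_sum_card_bipartiteBelow (fun a i ↦ y i + a * x i ≠ 0)
    _ = ∑ i : {i // x i = 0}, #{a : F | y i + a * x i ≠ 0} +
          ∑ i : {i // x i ≠ 0}, #{a : F | y i + a * x i ≠ 0} :=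
        (Fintype.sum_subtype_add_sum_subtype (fun i ↦ x i = 0) _).symm
    _ = Fintype.card F * hammingNorm (restrictZeros x y) +
          (Fintype.card F - 1) * hammingNorm x := by
        simp only [hzero, hsupp, ← mul_sum, sum_const, card_univ, smul_eq_mul,
          Fintype.card_subtype, hammingNorm, card_filter, mul_comm (Fintype.card F - 1)]

theorem hammingNorm_le_card_mul_hammingNorm_restrictZeros {x y : ι → F}
    (h : ∀ a : F, hammingNorm x ≤ hammingNorm (y + a • x)) :
    hammingNorm x ≤ Fintype.card F * hammingNorm (restrictZeros x y) := by
  have hsum : Fintype.card F * hammingNorm x ≤ ∑ a : F, hammingNorm (y + a • x) := by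
    simpa using card_nsmul_le_sum univ _ _ fun a _ ↦ h a
  rw [sum_hammingNorm_add_smul, Nat.sub_one_mul] at hsum
  have : hammingNorm x ≤ Fintype.card F * hammingNorm x :=
    Nat.le_mul_of_pos_left _ Fintype.card_pos
  lia

namespace IsMinWeightWord

variable {C : Submodule F (ι → F)} {c : ι → F}

theorem hammingNorm_le_card_mul_of_mem_residualCode (hc : IsMinWeightWord C c)
    {r : {i // c i = 0} → F} (hr : r ∈ residualCode C c) (hr₀ : r ≠ 0) :
    hammingNorm c ≤ Fintype.card F * hammingNorm r := by
  obtain ⟨v, hv, rfl⟩ := hr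
  have hvc : v ∉ F ∙ c := mt (hc.restrictZeros_eq_zero_iff hv).mpr hr₀
  refine hammingNorm_le_card_mul_hammingNorm_restrictZeros fun a ↦
    hc.hammingNorm_le _ (C.add_mem hv (C.smul_mem a hc.mem)) fun h ↦ hvc ?_
  rw [eq_neg_of_add_eq_zero_left h]
  exact neg_mem (Submodule.smul_mem _ a (Submodule.mem_span_singleton_self c))

end IsMinWeightWord

-- Allowing rational `d` lets the induction pass from `d` to `d / q` without nested ceilings.
theorem griesmer_bound_general (C : Submodule F (ι → F)) (d : ℚ)
    (hmin : ∀ c ∈ C, c ≠ 0 → d ≤ hammingNorm c) :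
    ∑ i ∈ range (finrank F C), ⌈d / (Fintype.card F : ℚ) ^ i⌉₊ ≤ Fintype.card ι := by
  induction hk : finrank F C generalizing ι d with
  | zero => simp
  | succ k ih =>
    have hC : C ≠ ⊥ := Submodule.one_le_finrank_iff.mp (by lia)
    obtain ⟨c, hc⟩ := exists_isMinWeightWord hC
    have hdim : finrank F (residualCode C c) = k := by
      have := hc.finrank_residualCode_add_one
      lia
    have hresidual : ∀ r ∈ residualCode C c, r ≠ 0 → d / Fintype.card F ≤ hammingNorm r := by
      intro r hr hr₀
      rw [div_le_iff₀' (by exact_mod_cast Fintype.card_pos)]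
      exact (hmin c hc.mem hc.ne_zero).trans
        (by exact_mod_cast hc.hammingNorm_le_card_mul_of_mem_residualCode hr hr₀)
    calc ∑ i ∈ range (k + 1), ⌈d / (Fintype.card F : ℚ) ^ i⌉₊
        = ∑ i ∈ range k, ⌈d / Fintype.card F / (Fintype.card F : ℚ) ^ i⌉₊ + ⌈d⌉₊ := by
          simp only [sum_range_succ', pow_zero, div_one, pow_succ', div_div]
      _ ≤ Fintype.card {i // c i = 0} + hammingNorm c :=
          add_le_add (ih _ _ hresidual hdim) (Nat.ceil_le.mpr (hmin c hc.mem hc.ne_zero))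
      _ = Fintype.card ι := card_zeros_add_hammingNorm c

/-- **Griesmer bound.** Let `q` be a prime power and `n ≥ k ≥ 1`. If `C ⊆ (F_q)^n`
is a linear code of dimension `k` whose minimum Hamming distance (between distinct
codewords) is at least `d ≥ 1`, then `n ≥ ∑_{i=0}^{k-1} ⌈d / q^i⌉`. -/
theorem griesmer_bound (q n k d : ℕ) (hq : IsPrimePow q)
    (hk : 1 ≤ k) (hkn : k ≤ n) (hd : 1 ≤ d)
    (F : Type) [Field F] [Fintype F] [DecidableEq F] (hcard : Fintype.card F = q)
    (C : Submodule F (Fin n → F))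
    (hdim : Module.finrank F C = k)
    (hmin : ∀ c ∈ C, ∀ c' ∈ C, c ≠ c' → d ≤ hammingDist c c') :
    (∑ i ∈ Finset.range k, ⌈(d : ℚ) / (q : ℚ) ^ i⌉₊) ≤ n := by
  subst hcard hdim
  simpa using griesmer_bound_general C d fun c hc hc₀ ↦
    mod_cast hammingDist_zero_right c ▸ hmin c hc 0 C.zero_mem hc₀
end

section
/- Let q be a prime power, and let n, k, d, i be natural numbers with n > k > 2 and d ≥ 2i + 1 ≥ 3. If there exists a systematic (n,k,q) code C ⊆ (F_q)^n with minimum Hamming distance at least d, then C(k,i)·(q−1)^i ≤ Σ_{j=d−i}^{n−k} C(n−k,j)·(q−1)^j, where C(a,b) denotes the binomial coefficient. -/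
/-!
Write the codewords as `(v, r v)`, where `v` is the message and `r v` its redundancy, and fix a
message `x`. Messages at distance `i` from `x` lie within `2 * i < d` of each other, so their
redundancies must differ; and each of these redundancies is at distance at least `d - i` from `r x`.
Thus `r` embeds the sphere of radius `i` around `x` into the complement of the open ball of radius
`d - i` around `r x`.
-/

open Finset

section HammingSphere

variable {ι α : Type*} [Fintype ι] [DecidableEq ι] [Fintype α] [DecidableEq α]
  {β : ι → Type*} [∀ a, Fintype (β a)] [∀ a, DecidableEq (β a)]

theorem card_filter_ne_eq_prod (x : ∀ a, β a) (s : Finset ι) :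
    #{y : ∀ a, β a | ({a | x a ≠ y a} : Finset ι) = s} = ∏ a ∈ s, (Fintype.card (β a) - 1) := by
  have filter_eq_piFinset :
      ({y : ∀ a, β a | ({a | x a ≠ y a} : Finset ι) = s} : Finset (∀ a, β a)) =
        Fintype.piFinset fun a ↦ if a ∈ s then univ.erase (x a) else {x a} := by
    ext y
    simp only [mem_filter_univ, Finset.ext_iff, Fintype.mem_piFinset]
    refine forall_congr' fun a ↦ ?_
    by_cases ha : a ∈ s <;> simp [ha, eq_comm]
  rw [filter_eq_piFinset, Fintype.card_piFinset]
  simp [apply_ite Finset.card, prod_ite_mem]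

/-- The sphere of radius `j` around `x` for the Hamming distance. -/
def hammingSphere (x : ∀ a, β a) (j : ℕ) : Finset (∀ a, β a) :=
  {y | hammingDist x y = j}

theorem mem_hammingSphere {x y : ∀ a, β a} {j : ℕ} :
    y ∈ hammingSphere x j ↔ hammingDist x y = j :=
  mem_filter_univ y

theorem card_hammingSphere (x : ι → α) (j : ℕ) :
    #(hammingSphere x j) = (Fintype.card ι).choose j * (Fintype.card α - 1) ^ j := by
  have mapsTo_powersetCard : Set.MapsTo (fun y : ι → α ↦ ({a | x a ≠ y a} : Finset ι))
      (hammingSphere x j) (powersetCard j univ : Finset (Finset ι)) := fun y hy ↦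
    mem_powersetCard_univ.mpr (mem_hammingSphere.mp hy)
  have card_fiber : ∀ s ∈ powersetCard j (univ : Finset ι),
      #{y ∈ hammingSphere x j | ({a | x a ≠ y a} : Finset ι) = s} =
        (Fintype.card α - 1) ^ j := by
    intro s hs
    obtain rfl : #s = j := mem_powersetCard_univ.mp hs
    rw [← prod_const, ← card_filter_ne_eq_prod x s, hammingSphere, filter_filter]
    congr 1
    exact filter_congr fun y _ ↦ and_iff_right_of_imp fun hy ↦ congrArg Finset.card hy
  rw [card_eq_sum_card_fiberwise mapsTo_powersetCard, sum_congr rfl card_fiber, sum_const,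
    card_powersetCard, card_univ, smul_eq_mul]

theorem card_filter_le_hammingDist (x : ∀ a, β a) (e : ℕ) :
    #{y | e ≤ hammingDist x y} = ∑ j ∈ Icc e (Fintype.card ι), #(hammingSphere x j) := by
  have mapsTo_Icc : Set.MapsTo (hammingDist x)
      ({y | e ≤ hammingDist x y} : Finset (∀ a, β a)) (Icc e (Fintype.card ι)) := fun y hy ↦
    mem_Icc.mpr ⟨(mem_filter_univ y).mp hy, hammingDist_le_card_fintype⟩
  rw [card_eq_sum_card_fiberwise mapsTo_Icc]
  refine sum_congr rfl fun j hj ↦ ?_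
  rw [hammingSphere, filter_filter]
  congr 1
  exact filter_congr fun y _ ↦ and_iff_right_of_imp fun hy ↦ hy ▸ (mem_Icc.mp hj).1

end HammingSphere

theorem hammingDist_fin_add {k m : ℕ} {β : Fin (k + m) → Type*} [∀ a, DecidableEq (β a)]
    (x y : ∀ a, β a) :
    hammingDist x y =
      hammingDist (fun a ↦ x (Fin.castAdd m a)) (fun a ↦ y (Fin.castAdd m a)) +
        hammingDist (fun a ↦ x (Fin.natAdd k a)) (fun a ↦ y (Fin.natAdd k a)) := by
  simp only [hammingDist, card_filter, Fin.sum_univ_add]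

/-- `r` is the redundancy map of a systematic code with minimum distance at least `d`: the
codewords are the pairs `(v, r v)`, and the Hamming distance of two pairs is the sum of the
distances of their components. -/
def IsRedundancyMap {κ ρ : Type*} [Fintype κ] [Fintype ρ] {β : κ → Type*} {γ : ρ → Type*}
    [∀ a, DecidableEq (β a)] [∀ b, DecidableEq (γ b)] (r : (∀ a, β a) → ∀ b, γ b) (d : ℕ) : Prop :=
  ∀ ⦃v w⦄, v ≠ w → d ≤ hammingDist v w + hammingDist (r v) (r w)

theorem exists_isRedundancyMap {k m d : ℕ} {α : Type*} [DecidableEq α] {C : Set (Fin (k + m) → α)}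
    (hsurj : Set.SurjOn (fun c a ↦ c (Fin.castAdd m a)) C Set.univ)
    (hmin : ∀ c ∈ C, ∀ c' ∈ C, c ≠ c' → d ≤ hammingDist c c') :
    ∃ r : (Fin k → α) → (Fin m → α), IsRedundancyMap r d := by
  choose φ hφC hφ using fun v ↦ hsurj (Set.mem_univ v)
  have message_φ (v : Fin k → α) : (fun a ↦ φ v (Fin.castAdd m a)) = v := hφ v
  refine ⟨fun v b ↦ φ v (Fin.natAdd k b), fun v w hvw ↦ ?_⟩
  have φ_ne : φ v ≠ φ w := fun h ↦ hvw (by rw [← message_φ v, h, message_φ])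
  have d_le := hmin _ (hφC v) _ (hφC w) φ_ne
  rwa [hammingDist_fin_add, message_φ, message_φ] at d_le

namespace IsRedundancyMap

variable {κ ρ : Type*} [Fintype κ] [Fintype ρ] [DecidableEq κ] {β : κ → Type*} {γ : ρ → Type*}
  [∀ a, DecidableEq (β a)] [∀ b, DecidableEq (γ b)] [∀ a, Fintype (β a)]
  {r : (∀ a, β a) → ∀ b, γ b} {d i : ℕ}

theorem injOn_hammingSphere (hr : IsRedundancyMap r d) (hid : 2 * i < d) (x : ∀ a, β a) :
    Set.InjOn r (hammingSphere x i) := by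
  intro v hv w hw hvw
  by_contra hne
  have d_le : d ≤ hammingDist v w := by simpa only [hvw, hammingDist_self, add_zero] using hr hne
  have dist_le : hammingDist v w ≤ i + i := by
    simpa only [mem_hammingSphere.mp hv, mem_hammingSphere.mp hw] using
      hammingDist_triangle_left v w x
  lia

theorem sub_le_hammingDist (hr : IsRedundancyMap r d) (hi : 0 < i) {x v : ∀ a, β a}
    (hv : v ∈ hammingSphere x i) : d - i ≤ hammingDist (r x) (r v) := by
  rw [mem_hammingSphere] at hv
  have d_le := hr (hammingDist_pos.mp (hv ▸ hi))
  rw [hv] at d_le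
  exact Nat.sub_le_iff_le_add'.mpr d_le

theorem card_hammingSphere_le [DecidableEq ρ] [∀ b, Fintype (γ b)] (hr : IsRedundancyMap r d)
    (hi : 0 < i) (hid : 2 * i < d) (x : ∀ a, β a) :
    #(hammingSphere x i) ≤ #{y | d - i ≤ hammingDist (r x) y} :=
  card_le_card_of_injOn r (fun v hv ↦ (mem_filter_univ (r v)).mpr (hr.sub_le_hammingDist hi hv))
    (hr.injOn_hammingSphere hid x)

end IsRedundancyMap

theorem bound_A_general {n k d i : ℕ} {α : Type*} [Fintype α] [DecidableEq α] [Nonempty α]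
    (hi : 0 < i) (hid : 2 * i < d) (hkn : k ≤ n) {C : Set (Fin n → α)}
    (hsurj : Set.SurjOn (fun c (j : Fin k) ↦ c (Fin.castLE hkn j)) C Set.univ)
    (hmin : ∀ c ∈ C, ∀ c' ∈ C, c ≠ c' → d ≤ hammingDist c c') :
    k.choose i * (Fintype.card α - 1) ^ i ≤
      ∑ j ∈ Icc (d - i) (n - k), (n - k).choose j * (Fintype.card α - 1) ^ j := by
  obtain ⟨m, rfl⟩ := Nat.exists_eq_add_of_le hkn
  obtain ⟨r, hr⟩ := exists_isRedundancyMap hsurj hmin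
  obtain ⟨x⟩ : Nonempty (Fin k → α) := inferInstance
  simpa only [card_filter_le_hammingDist, card_hammingSphere, Fintype.card_fin,
    Nat.add_sub_cancel_left] using hr.card_hammingSphere_le hi hid x

/-- **Bound A.** Let `q` be a prime power and `n > k > 2`, `d ≥ 2i + 1 ≥ 3`.
If `C ⊆ (F_q)^n` is a systematic `(n,k,q)` code (the projection onto the first
`k` coordinates restricts to a bijection from `C` onto `(F_q)^k`) with minimum
Hamming distance at least `d`, then
`C(k,i)·(q−1)^i ≤ ∑_{j=d−i}^{n−k} C(n−k,j)·(q−1)^j`. -/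
theorem bound_A (q n k d i : ℕ) (hq : IsPrimePow q)
    (hkn : k < n) (hk : 2 < k) (hi : 3 ≤ 2 * i + 1) (hd : 2 * i + 1 ≤ d)
    (F : Type) [Field F] [Fintype F] [DecidableEq F] (hcard : Fintype.card F = q)
    (C : Set (Fin n → F))
    (hsys : Set.BijOn (fun (c : Fin n → F) (j : Fin k) => c (Fin.castLE hkn.le j))
      C Set.univ)
    (hmin : ∀ c ∈ C, ∀ c' ∈ C, c ≠ c' → d ≤ hammingDist c c') :
    Nat.choose k i * (q - 1) ^ i ≤
      ∑ j ∈ Finset.Icc (d - i) (n - k), Nat.choose (n - k) j * (q - 1) ^ j := by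
  subst hcard
  exact bound_A_general (by lia) (by lia) hkn.le hsys.surjOn hmin
end
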